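/- Fix integers 0 ≤ c_min and c_max ≥ c_min + 2, and a block-tuple M = (m_{c_min}, …, m_{c_max}) with m_{c_max−1} > 1. The map replacing the last set S_k by S_k ∖ {c_max} is a bijection from the set of valid tuples S = (S_1, …, S_k) for M in which c_max − 1 belongs to exactly one of the sets S_i and that set also contains c_max (necessarily that set is S_k), onto the set of valid tuples for M' satisfying property (Q); its inverse replaces the last set S'_k by S'_k ∪ {c_max}. -/

import Mathlib

/-- `M` is a block-tuple on `{cmin, …, cmax}`: each entry is a positive odd integer. -/
def IsBlockTuple (cmin cmax : ℕ) (M : ℕ → ℕ) : Prop :=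
  ∀ c ∈ Finset.Icc cmin cmax, 0 < M c ∧ Odd (M c)

/-- `S = (S_1, …, S_k)` is a valid tuple for the block-tuple `M` on `{cmin, …, cmax}`:
(1) each `S_i` is a nonempty set of consecutive integers;
(2) the union of the `S_i` is `{cmin, …, cmax}`;
(3) if `i < j`, `s ∈ S_i`, `t ∈ S_j` then `s ≤ t`;
(4) if `i < j` and `c ∈ S_i ∩ S_j` then `j = i + 1`, `|S_j| ≥ 2` and `m_c > 1`;
(5) if `i ≥ 2` (1-indexed), `|S_i| ≥ 2` and `c = min S_i` has `m_c > 1`, then `c ∈ S_{i-1}`. -/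
def IsValidTuple (cmin cmax : ℕ) (M : ℕ → ℕ) (S : List (Finset ℕ)) : Prop :=
  (∀ i : Fin S.length, ∃ a b : ℕ, a ≤ b ∧ S.get i = Finset.Icc a b) ∧
  (∀ c : ℕ, c ∈ Finset.Icc cmin cmax ↔ ∃ i : Fin S.length, c ∈ S.get i) ∧
  (∀ i j : Fin S.length, i < j → ∀ s ∈ S.get i, ∀ t ∈ S.get j, s ≤ t) ∧
  (∀ i j : Fin S.length, i < j → ∀ c : ℕ, c ∈ S.get i → c ∈ S.get j →
    (j : ℕ) = (i : ℕ) + 1 ∧ 2 ≤ (S.get j).card ∧ 1 < M c) ∧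
  (∀ i : Fin S.length, 1 ≤ (i : ℕ) → 2 ≤ (S.get i).card →
    ∀ c : ℕ, c ∈ S.get i → (∀ x ∈ S.get i, c ≤ x) → 1 < M c →
    ∃ j : Fin S.length, (j : ℕ) + 1 = (i : ℕ) ∧ c ∈ S.get j)

/-- Property (Q) for a tuple `S'` (a candidate valid tuple for `M'`): if the
minimum of the last set `S'_k` is `cmax - 1`, then `k ≥ 2` and
`cmax - 1 ∈ S'_{k-1}`. -/
def PropQ (cmax : ℕ) (S' : List (Finset ℕ)) : Prop :=
  (cmax - 1 ∈ S'.getLastD ∅ ∧ ∀ x ∈ S'.getLastD ∅, cmax - 1 ≤ x) →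
    (2 ≤ S'.length ∧ cmax - 1 ∈ S'.getD (S'.length - 2) ∅)

/-!
The last set of a valid tuple on `{cmin, …, cmax}` is an interval `{a, …, cmax}`, and all earlier
sets lie in `{cmin, …, a}`. Hence validity sees the last set only through its minimum `a` and
through whether it has at least two elements, so its upper end may be moved freely as long as it
stays above `a`. The uniqueness condition on tuples for `M` and property (Q) on tuples for `M'` both
say exactly that `a < cmax - 1`.
-/

open Finset

section ListAppend

variable {α : Type*} {L : List α} {x y : α}

theorem exists_lt_get_append_singleton (hx : x ∈ L) (y : α) :
    ∃ i j : Fin (L ++ [y]).length, i < j ∧ (L ++ [y]).get i = x ∧ (L ++ [y]).get j = y := by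
  obtain ⟨i, rfl⟩ := List.mem_iff_get.1 hx
  exact ⟨⟨i, by simp⟩, ⟨L.length, by simp⟩, i.isLt, by simp, by simp⟩

theorem get_append_singleton_mem_or_eq_last (i : Fin (L ++ [y]).length) :
    (L ++ [y]).get i ∈ L ∨ (i : ℕ) = L.length ∧ (L ++ [y]).get i = y := by
  rcases (Nat.lt_succ_iff_lt_or_eq.1 (by simpa using i.isLt) : (i : ℕ) < L.length ∨ _) with hi | hi
  · exact .inl (by simp [List.getElem_append_left hi])
  · exact .inr ⟨hi, by simp [hi]⟩

theorem get_append_singleton_mem_of_lt {i j : Fin (L ++ [y]).length} (hij : i < j) :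
    (L ++ [y]).get i ∈ L := by
  rcases get_append_singleton_mem_or_eq_last i with hi | ⟨hi, -⟩
  · exact hi
  · have hj : (j : ℕ) < L.length + 1 := by simpa using j.isLt
    omega

theorem get_cast_append_singleton_congr {P : α → Prop} (hP : P x ↔ P y)
    (hlen : (L ++ [x]).length = (L ++ [y]).length) (i : Fin (L ++ [x]).length) :
    P ((L ++ [y]).get (i.cast hlen)) ↔ P ((L ++ [x]).get i) := by
  by_cases hi : (i : ℕ) < L.length
  · simp [List.getElem_append_left hi]
  · simp [List.getElem_append_right (not_lt.1 hi), hP]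

end ListAppend

section AppendIcc

variable {a b b' c : ℕ} {L : List (Finset ℕ)}

theorem mem_get_cast_append_Icc_iff (hb : a ≤ b) (hb' : a ≤ b') (hc : c ≤ a)
    (hlen : (L ++ [Icc a b']).length = (L ++ [Icc a b]).length) (i : Fin (L ++ [Icc a b']).length) :
    c ∈ (L ++ [Icc a b]).get (i.cast hlen) ↔ c ∈ (L ++ [Icc a b']).get i :=
  get_cast_append_singleton_congr (P := (c ∈ ·)) (by simp only [mem_Icc]; omega) hlen i

theorem two_le_card_get_cast_append_Icc_iff (hb : a < b) (hb' : a < b')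
    (hlen : (L ++ [Icc a b']).length = (L ++ [Icc a b]).length) (i : Fin (L ++ [Icc a b']).length) :
    2 ≤ #((L ++ [Icc a b]).get (i.cast hlen)) ↔ 2 ≤ #((L ++ [Icc a b']).get i) :=
  get_cast_append_singleton_congr (P := (2 ≤ #·)) (by simp only [Nat.card_Icc]; omega) hlen i

end AppendIcc

namespace IsValidTuple

variable {cmin cmax a b b' c n s t : ℕ} {M : ℕ → ℕ} {L S : List (Finset ℕ)} {A X : Finset ℕ}

theorem mem_Icc_iff_exists_mem (h : IsValidTuple cmin cmax M S) :
    c ∈ Icc cmin cmax ↔ ∃ X ∈ S, c ∈ X := by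
  rw [h.2.1 c, List.exists_mem_iff_get]

theorem exists_eq_Icc (h : IsValidTuple cmin cmax M S) (hX : X ∈ S) :
    ∃ a b, a ≤ b ∧ X = Icc a b := by
  obtain ⟨i, rfl⟩ := List.mem_iff_get.1 hX
  exact h.1 i

theorem le_of_mem_append_singleton (h : IsValidTuple cmin cmax M (L ++ [A])) (hX : X ∈ L)
    (hs : s ∈ X) (ht : t ∈ A) : s ≤ t := by
  obtain ⟨i, j, hij, rfl, hj⟩ := exists_lt_get_append_singleton hX A
  exact h.2.2.1 i j hij s hs t (by rwa [hj])

theorem two_le_card_of_mem_append_singleton (h : IsValidTuple cmin cmax M (L ++ [A])) (hX : X ∈ L)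
    (hcX : c ∈ X) (hcA : c ∈ A) : 2 ≤ #A := by
  obtain ⟨i, j, hij, rfl, hj⟩ := exists_lt_get_append_singleton hX A
  simpa only [hj] using (h.2.2.2.1 i j hij c hcX (by rwa [hj])).2.1

theorem exists_mem_of_one_lt_append_Icc (h : IsValidTuple cmin cmax M (L ++ [Icc a b]))
    (hab : a < b) (ha : cmin < a) (hMa : 1 < M a) : ∃ X ∈ L, a ∈ X := by
  have hcmin : cmin ∈ Icc cmin cmax := by
    obtain ⟨-, hac⟩ := mem_Icc.1 <| h.mem_Icc_iff_exists_mem.2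
      ⟨Icc a b, by simp, left_mem_Icc.2 hab.le⟩
    exact left_mem_Icc.2 (ha.le.trans hac)
  have hL : L ≠ [] := by
    rintro rfl
    obtain ⟨X, hX, hcX⟩ := h.mem_Icc_iff_exists_mem.1 hcmin
    obtain rfl : X = Icc a b := by simpa using hX
    exact ha.not_ge (mem_Icc.1 hcX).1
  have hcard : 2 ≤ #(Icc a b) := by
    rw [Nat.card_Icc]
    omega
  obtain ⟨j, hj, haj⟩ := h.2.2.2.2 ⟨L.length, by simp⟩ (List.length_pos_iff.2 hL)
    (by simpa using hcard) a (by simpa using hab.le) (by simp +contextual) hMa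
  exact ⟨_, get_append_singleton_mem_of_lt (Fin.lt_def.2 (Nat.lt_of_succ_le hj.le)), haj⟩

theorem exists_eq_append_Icc (h : IsValidTuple cmin cmax M S) (hc : cmin ≤ cmax) :
    ∃ L a, a ≤ cmax ∧ S = L ++ [Icc a cmax] := by
  obtain ⟨X, hX, hcX⟩ := h.mem_Icc_iff_exists_mem.1 (right_mem_Icc.2 hc)
  obtain ⟨L, A, rfl⟩ := (List.eq_nil_or_concat' S).resolve_left (List.ne_nil_of_mem hX)
  obtain ⟨a, b, hab, rfl⟩ := h.exists_eq_Icc (X := A) (by simp)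
  have hbc : b ≤ cmax := (mem_Icc.1 <| h.mem_Icc_iff_exists_mem.2
    ⟨Icc a b, by simp, right_mem_Icc.2 hab⟩).2
  have hcb : cmax ≤ b := by
    rcases List.mem_append.1 hX with hX | hX
    · exact h.le_of_mem_append_singleton hX hcX (right_mem_Icc.2 hab)
    · obtain rfl := List.mem_singleton.1 hX
      exact (mem_Icc.1 hcX).2
  obtain rfl := hbc.antisymm hcb
  exact ⟨L, a, hab, rfl⟩

theorem mem_Icc_iff_of_append_Icc (h : IsValidTuple cmin b M (L ++ [Icc a b])) (hb : a ≤ b)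
    (hb' : a ≤ b') : c ∈ Icc cmin b' ↔ ∃ X ∈ L ++ [Icc a b'], c ∈ X := by
  have hcover {d : ℕ} : d ∈ Icc cmin b ↔ (∃ X ∈ L, d ∈ X) ∨ d ∈ Icc a b := by
    simpa [or_and_right, exists_or] using h.mem_Icc_iff_exists_mem (c := d)
  have hcmin : cmin ≤ a := (mem_Icc.1 (hcover.2 (.inr (left_mem_Icc.2 hb)))).1
  have hle : (∃ X ∈ L, c ∈ X) → c ≤ a := fun ⟨X, hX, hcX⟩ ↦
    h.le_of_mem_append_singleton hX hcX (left_mem_Icc.2 hb)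
  have hc := hcover (d := c)
  simp only [mem_Icc, List.mem_append, List.mem_singleton, or_and_right, exists_or,
    exists_eq_left] at hc ⊢
  by_cases hca : c ≤ a
  · rw [show cmin ≤ c ∧ c ≤ b' ↔ cmin ≤ c ∧ c ≤ b by omega, hc]
    exact or_congr_right (by omega)
  · rw [or_iff_right (mt hle hca)]
    omega

theorem append_Icc_of_lt (h : IsValidTuple cmin b M (L ++ [Icc a b])) (hb : a < b) (hb' : a < b') :
    IsValidTuple cmin b' M (L ++ [Icc a b']) := by
  have hlen : (L ++ [Icc a b']).length = (L ++ [Icc a b]).length := by simp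
  have hmem {c : ℕ} (hc : c ≤ a) := mem_get_cast_append_Icc_iff hb.le hb'.le hc hlen
  have hcard := two_le_card_get_cast_append_Icc_iff hb hb' hlen
  have hle {X : Finset ℕ} (hX : X ∈ L) {s : ℕ} (hs : s ∈ X) : s ≤ a :=
    h.le_of_mem_append_singleton hX hs (left_mem_Icc.2 hb.le)
  refine ⟨fun i ↦ ?interval, fun c ↦ ?cover, fun i j hij s hs t ht ↦ ?monotone,
    fun i j hij c hci hcj ↦ ?overlap, fun i hi hi2 c hc hcmin hMc ↦ ?minimum⟩
  case interval =>
    exact (get_cast_append_singleton_congr (P := fun X ↦ ∃ a b, a ≤ b ∧ X = Icc a b)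
      (iff_of_true ⟨a, b', hb'.le, rfl⟩ ⟨a, b, hb.le, rfl⟩) hlen i).1 (h.1 _)
  case cover =>
    rw [h.mem_Icc_iff_of_append_Icc hb.le hb'.le, List.exists_mem_iff_get]
  case monotone =>
    have hsa : s ≤ a := hle (get_append_singleton_mem_of_lt hij) hs
    rcases le_total t a with hta | hat
    · exact h.2.2.1 (i.cast hlen) (j.cast hlen) hij s ((hmem hsa i).2 hs) t ((hmem hta j).2 ht)
    · exact hsa.trans hat
  case overlap =>
    have hca : c ≤ a := hle (get_append_singleton_mem_of_lt hij) hci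
    obtain ⟨hji, hj2, hMc⟩ := h.2.2.2.1 (i.cast hlen) (j.cast hlen) hij c
      ((hmem hca i).2 hci) ((hmem hca j).2 hcj)
    exact ⟨hji, (hcard j).1 hj2, hMc⟩
  case minimum =>
    have hca : c ≤ a := by
      rcases get_append_singleton_mem_or_eq_last i with hiL | ⟨-, hilast⟩
      · exact hle hiL hc
      · exact hcmin a (by rw [hilast]; exact left_mem_Icc.2 hb'.le)
    have hcmin' : ∀ x ∈ (L ++ [Icc a b]).get (i.cast hlen), c ≤ x := fun x hx ↦
      (le_total x a).elim (fun hxa ↦ hcmin x ((hmem hxa i).1 hx)) hca.trans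
    obtain ⟨j, hji, hcj⟩ := h.2.2.2.2 (i.cast hlen) hi ((hcard i).2 hi2) c
      ((hmem hca i).2 hc) hcmin' hMc
    exact ⟨j.cast hlen.symm, hji, (hmem hca _).1 hcj⟩

theorem lt_of_append_Icc_of_unique (h : IsValidTuple cmin (n + 1) M (L ++ [Icc a (n + 1)]))
    (ha : a ≤ n + 1) (hn : cmin < n) (hM : 1 < M n) {i₀ : Fin (L ++ [Icc a (n + 1)]).length}
    (hmem : n ∈ (L ++ [Icc a (n + 1)]).get i₀) (hmem' : n + 1 ∈ (L ++ [Icc a (n + 1)]).get i₀)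
    (huniq : ∀ i : Fin (L ++ [Icc a (n + 1)]).length,
      n ∈ (L ++ [Icc a (n + 1)]).get i → i = i₀) : a < n := by
  rcases get_append_singleton_mem_or_eq_last i₀ with hL | ⟨hi₀, hlast⟩
  · have hle := h.le_of_mem_append_singleton hL hmem' (left_mem_Icc.2 ha)
    have hcard := h.two_le_card_of_mem_append_singleton hL hmem' (right_mem_Icc.2 ha)
    rw [Nat.card_Icc] at hcard
    omega
  · have han : a ≤ n := (mem_Icc.1 (hlast ▸ hmem)).1
    refine han.lt_of_ne ?_
    rintro rfl
    obtain ⟨X, hX, haX⟩ := h.exists_mem_of_one_lt_append_Icc (Nat.lt_succ_self a) hn hM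
    obtain ⟨i, j, hij, rfl, -⟩ := exists_lt_get_append_singleton hX (Icc a (a + 1))
    have hi : i = i₀ := huniq i haX
    have hj : (j : ℕ) < L.length + 1 := by simpa using j.isLt
    omega

theorem exists_unique_overlap_iff_lt (h : IsValidTuple cmin (n + 1) M (L ++ [Icc a (n + 1)]))
    (ha : a ≤ n + 1) (hn : cmin < n) (hM : 1 < M n) :
    (∃ i₀ : Fin (L ++ [Icc a (n + 1)]).length, n ∈ (L ++ [Icc a (n + 1)]).get i₀ ∧
      n + 1 ∈ (L ++ [Icc a (n + 1)]).get i₀ ∧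
      ∀ i : Fin (L ++ [Icc a (n + 1)]).length, n ∈ (L ++ [Icc a (n + 1)]).get i → i = i₀) ↔
      a < n := by
  refine ⟨fun ⟨i₀, hmem, hmem', huniq⟩ ↦ h.lt_of_append_Icc_of_unique ha hn hM hmem hmem' huniq,
    fun han ↦ ⟨⟨L.length, by simp⟩, by simpa using han.le, by simpa using ha, fun i hi ↦ ?_⟩⟩
  rcases get_append_singleton_mem_or_eq_last i with hL | ⟨hlast, -⟩
  · exact absurd (h.le_of_mem_append_singleton hL hi (left_mem_Icc.2 ha)) han.not_ge
  · exact Fin.ext hlast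

theorem propQ_iff_lt (h : IsValidTuple cmin n M (L ++ [Icc a n])) (ha : a ≤ n) :
    PropQ (n + 1) (L ++ [Icc a n]) ↔ a < n := by
  constructor
  · intro hQ
    refine ha.lt_of_ne ?_
    rintro rfl
    obtain ⟨hlen, hmem⟩ := hQ (by simp)
    have hlt : L.length - 1 < L.length := by
      simp only [List.length_append, List.length_singleton] at hlen
      omega
    have hpenult : a ∈ L[L.length - 1] := by
      simpa [List.getElem_append_left hlt] using hmem
    have hcard := h.two_le_card_of_mem_append_singleton (List.getElem_mem hlt) hpenult (by simp)
    simp at hcard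
  · rintro han ⟨-, hmin⟩
    exact absurd (hmin a (by simpa using ha)) han.not_ge

end IsValidTuple

/-- The valid tuples for `M` on `{cmin, …, cmax}` whose last set is `{a, …, cmax}` with `a < n`.
Both sides of the bijection are of this form, with the same `n`: the domain for the upper end
`n + 1`, the codomain for the upper end `n`. -/
def validTuplesLastMinLT (cmin cmax n : ℕ) (M : ℕ → ℕ) : Set (List (Finset ℕ)) :=
  {S | IsValidTuple cmin cmax M S ∧ ∃ L a, a < n ∧ S = L ++ [Icc a cmax]}

section LastMinLT

variable {cmin n : ℕ} {M : ℕ → ℕ}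

theorem setOf_unique_overlap_eq (hn : cmin < n) (hM : 1 < M n) :
    {S : List (Finset ℕ) | IsValidTuple cmin (n + 1) M S ∧
      ∃ i₀ : Fin S.length, n ∈ S.get i₀ ∧ n + 1 ∈ S.get i₀ ∧
        ∀ i : Fin S.length, n ∈ S.get i → i = i₀} = validTuplesLastMinLT cmin (n + 1) n M := by
  ext S
  refine and_congr_right fun hS ↦ ⟨fun hU ↦ ?_, ?_⟩
  · obtain ⟨L, a, ha, rfl⟩ := hS.exists_eq_append_Icc (by omega)
    exact ⟨L, a, (hS.exists_unique_overlap_iff_lt ha hn hM).1 hU, rfl⟩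
  · rintro ⟨L, a, ha, rfl⟩
    exact (hS.exists_unique_overlap_iff_lt (by omega) hn hM).2 ha

theorem setOf_propQ_eq (hn : cmin ≤ n) :
    {S : List (Finset ℕ) | IsValidTuple cmin n M S ∧ PropQ (n + 1) S} =
      validTuplesLastMinLT cmin n n M := by
  ext S
  refine and_congr_right fun hS ↦ ⟨fun hQ ↦ ?_, ?_⟩
  · obtain ⟨L, a, ha, rfl⟩ := hS.exists_eq_append_Icc hn
    exact ⟨L, a, (hS.propQ_iff_lt ha).1 hQ, rfl⟩
  · rintro ⟨L, a, ha, rfl⟩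
    exact (hS.propQ_iff_lt ha.le).2 ha

theorem dropLast_append_sdiff_Icc (L : List (Finset ℕ)) (a n : ℕ) :
    (L ++ [Icc a (n + 1)]).dropLast ++ [(L ++ [Icc a (n + 1)]).getLastD ∅ \ {n + 1}] =
      L ++ [Icc a n] := by
  have hIcc : Icc a (n + 1) \ {n + 1} = Icc a n := by
    ext
    simp only [mem_sdiff, mem_Icc, mem_singleton]
    omega
  simp [hIcc]

theorem dropLast_append_union_Icc (L : List (Finset ℕ)) {a n : ℕ} (ha : a ≤ n + 1) :
    (L ++ [Icc a n]).dropLast ++ [(L ++ [Icc a n]).getLastD ∅ ∪ {n + 1}] =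
      L ++ [Icc a (n + 1)] := by
  have hIcc : Icc a n ∪ {n + 1} = Icc a (n + 1) := by
    ext
    simp only [mem_union, mem_Icc, mem_singleton]
    omega
  simp [hIcc]

end LastMinLT

/-- Suppose `m_{cmax-1} > 1` and `cmax ≥ cmin + 2`. Replacing the last set `S_k`
by `S_k \ {cmax}` is a bijection from the valid tuples for `M` in which `cmax - 1`
belongs to exactly one of the sets and that set also contains `cmax`, onto the
valid tuples for `M'` satisfying property (Q); its inverse replaces the last set
`S'_k` by `S'_k ∪ {cmax}`. -/
theorem bijOn_unique_overlap_case (cmin cmax : ℕ) (M : ℕ → ℕ)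
    (h2 : cmin + 2 ≤ cmax) (hM : IsBlockTuple cmin cmax M)
    (h1 : 1 < M (cmax - 1)) :
    Set.BijOn
      (fun S : List (Finset ℕ) => S.dropLast ++ [S.getLastD ∅ \ {cmax}])
      {S : List (Finset ℕ) | IsValidTuple cmin cmax M S ∧
        ∃ i0 : Fin S.length, cmax - 1 ∈ S.get i0 ∧ cmax ∈ S.get i0 ∧
          ∀ i : Fin S.length, cmax - 1 ∈ S.get i → i = i0}
      {S' : List (Finset ℕ) | IsValidTuple cmin (cmax - 1) M S' ∧ PropQ cmax S'} ∧
    Set.InvOn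
      (fun S' : List (Finset ℕ) => S'.dropLast ++ [S'.getLastD ∅ ∪ {cmax}])
      (fun S : List (Finset ℕ) => S.dropLast ++ [S.getLastD ∅ \ {cmax}])
      {S : List (Finset ℕ) | IsValidTuple cmin cmax M S ∧
        ∃ i0 : Fin S.length, cmax - 1 ∈ S.get i0 ∧ cmax ∈ S.get i0 ∧
          ∀ i : Fin S.length, cmax - 1 ∈ S.get i → i = i0}
      {S' : List (Finset ℕ) | IsValidTuple cmin (cmax - 1) M S' ∧ PropQ cmax S'} := by
  obtain ⟨n, rfl⟩ : ∃ n, cmax = n + 1 := ⟨cmax - 1, by omega⟩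
  simp only [Nat.add_sub_cancel] at h1 ⊢
  rw [setOf_unique_overlap_eq (by omega) h1, setOf_propQ_eq (by omega), and_comm]
  refine and_iff_left_of_imp (fun hinv ↦ hinv.bijOn ?mapsTo ?mapsTo_inv) |>.2 ⟨?left, ?right⟩
  case mapsTo =>
    rintro _ ⟨hS, L, a, ha, rfl⟩
    simp only [dropLast_append_sdiff_Icc]
    exact ⟨hS.append_Icc_of_lt (by omega) ha, L, a, ha, rfl⟩
  case mapsTo_inv =>
    rintro _ ⟨hS, L, a, ha, rfl⟩
    simp only [dropLast_append_union_Icc L (by omega : a ≤ n + 1)]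
    exact ⟨hS.append_Icc_of_lt ha (by omega), L, a, ha, rfl⟩
  case left =>
    rintro _ ⟨-, L, a, ha, rfl⟩
    simp only [dropLast_append_sdiff_Icc, dropLast_append_union_Icc L (by omega : a ≤ n + 1)]
  case right =>
    rintro _ ⟨-, L, a, ha, rfl⟩
    simp only [dropLast_append_sdiff_Icc, dropLast_append_union_Icc L (by omega : a ≤ n + 1)]
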